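/- arXiv:1905.00471 — 8 statements merged into one kernel-verified Lean document; each statement's English description precedes it below -/
import Mathlib

section
/- Let (Λ, w, π) be a balanced Γ-fair graph over a weighted bidirected graph (Γ, δ, ‾), with a chosen balanced involution ε ↦ ε̄ on E(Λ). Assume that for any two vertices α, β of Λ there exists a directed path in Λ from α to β, and that for every directed closed path in Λ (a path from a vertex back to itself) the product of the weights of its edges equals 1. Then there exists a function d: V(Λ) → (0,∞) such that w(ε) = d(β)/d(α) for every edge ε: α → β of Λ, and consequently for every edge e: a → b of Γ: (i) for every vertex α of Λ with π(α) = a, the family {d(target(ε))/d(source(ε)) : ε ∈ E(Λ), source(ε) = α, π(ε) = e} is unconditionally summable with sum δ(e); and (ii) for every vertex β of Λ with π(β) = b, the family {d(source(ε))/d(target(ε)) : ε ∈ E(Λ), target(ε) = β, π(ε) = e} is unconditionally summable with sum δ(e). -/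
/-- A directed multigraph. -/
structure DiGraph where
  V : Type
  E : Type
  src : E → V
  tgt : E → V

/-- A graph homomorphism between directed multigraphs. -/
structure DiGraphHom (Λ Γ : DiGraph) where
  onV : Λ.V → Γ.V
  onE : Λ.E → Γ.E
  map_src : ∀ ε, Γ.src (onE ε) = onV (Λ.src ε)
  map_tgt : ∀ ε, Γ.tgt (onE ε) = onV (Λ.tgt ε)

/-- The structure of a weighted bidirected graph on a directed multigraph `Γ`:
a positive weight function `δ` and an involution of edges exchanging sources and
targets and preserving weights. -/
structure BidirectedWeights (Γ : DiGraph) where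
  δ : Γ.E → ℝ
  δ_pos : ∀ e, 0 < δ e
  bar : Γ.E → Γ.E
  bar_bar : ∀ e, bar (bar e) = e
  src_bar : ∀ e, Γ.src (bar e) = Γ.tgt e
  tgt_bar : ∀ e, Γ.tgt (bar e) = Γ.src e
  δ_bar : ∀ e, δ (bar e) = δ e

/-- `(Λ, w, π)` is a `Γ`-fair graph: `w` is a positive weight function and for every
edge `e : a → b` of `Γ` and every vertex `α` of `Λ` over `a`, the weights of edges of `Λ`
with source `α` lying over `e` sum (unconditionally) to `δ e`. -/
def IsFair {Γ Λ : DiGraph} (D : BidirectedWeights Γ) (w : Λ.E → ℝ)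
    (π : DiGraphHom Λ Γ) : Prop :=
  (∀ ε, 0 < w ε) ∧
    ∀ e : Γ.E, ∀ α : Λ.V, π.onV α = Γ.src e →
      HasSum (fun ε : {ε : Λ.E // Λ.src ε = α ∧ π.onE ε = e} => w ε.1) (D.δ e)

/-- Directed paths in a directed multigraph. -/
inductive DiPath (G : DiGraph) : G.V → G.V → Type
  | nil (v : G.V) : DiPath G v v
  | cons {v : G.V} (e : G.E) (p : DiPath G (G.tgt e) v) : DiPath G (G.src e) v

/-- The product of the weights of the edges of a directed path. -/
def DiPath.wprod {G : DiGraph} (w : G.E → ℝ) : ∀ {u v : G.V}, DiPath G u v → ℝ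
  | _, _, .nil _ => 1
  | _, _, .cons e p => w e * p.wprod w

/-- Concatenation of directed paths. -/
def DiPath.comp {G : DiGraph} : ∀ {a b c : G.V}, DiPath G a b → DiPath G b c → DiPath G a c
  | _, _, _, .nil _, q => q
  | _, _, _, .cons e p, q => .cons e (p.comp q)

theorem DiPath.wprod_comp {G : DiGraph} (w : G.E → ℝ) {a b c : G.V} (p : DiPath G a b)
    (q : DiPath G b c) : (p.comp q).wprod w = p.wprod w * q.wprod w := by
  induction p with
  | nil v => simp [DiPath.comp, DiPath.wprod]
  | cons e p ih => simp [DiPath.comp, DiPath.wprod, ih, mul_assoc]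

theorem DiPath.wprod_pos {G : DiGraph} (w : G.E → ℝ) (hw : ∀ e, 0 < w e) {a b : G.V}
    (p : DiPath G a b) : 0 < p.wprod w := by
  induction p with
  | nil v => simp [DiPath.wprod]
  | cons e p ih => simpa [DiPath.wprod] using mul_pos (hw e) ih

theorem balanced_fair_graph_dimension_function
    {Γ Λ : DiGraph} (D : BidirectedWeights Γ) (w : Λ.E → ℝ) (π : DiGraphHom Λ Γ)
    (hfair : IsFair D w π)
    -- a chosen balanced involution on the edges of `Λ`
    (barΛ : Λ.E → Λ.E)
    (hbar_bar : ∀ ε, barΛ (barΛ ε) = ε)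
    (hsrc_bar : ∀ ε, Λ.src (barΛ ε) = Λ.tgt ε)
    (htgt_bar : ∀ ε, Λ.tgt (barΛ ε) = Λ.src ε)
    (hw_bar : ∀ ε, w ε * w (barΛ ε) = 1)
    (hπ_bar : ∀ ε, π.onE (barΛ ε) = D.bar (π.onE ε))
    -- connectivity by directed paths
    (hconn : ∀ α β : Λ.V, Nonempty (DiPath Λ α β))
    -- every directed closed path has weight product 1
    (hloop : ∀ (v : Λ.V) (p : DiPath Λ v v), p.wprod w = 1) :
    ∃ d : Λ.V → ℝ, (∀ α, 0 < d α) ∧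
      (∀ ε : Λ.E, w ε = d (Λ.tgt ε) / d (Λ.src ε)) ∧
      (∀ e : Γ.E, ∀ α : Λ.V, π.onV α = Γ.src e →
        HasSum (fun ε : {ε : Λ.E // Λ.src ε = α ∧ π.onE ε = e} =>
          d (Λ.tgt ε.1) / d (Λ.src ε.1)) (D.δ e)) ∧
      (∀ e : Γ.E, ∀ β : Λ.V, π.onV β = Γ.tgt e →
        HasSum (fun ε : {ε : Λ.E // Λ.tgt ε = β ∧ π.onE ε = e} =>
          d (Λ.src ε.1) / d (Λ.tgt ε.1)) (D.δ e)) := by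
  obtain ⟨hpos, hsum⟩ := hfair
  obtain ⟨d, hd, hwd⟩ : ∃ d : Λ.V → ℝ, (∀ α, 0 < d α) ∧
      (∀ ε : Λ.E, w ε = d (Λ.tgt ε) / d (Λ.src ε)) := by
    rcases isEmpty_or_nonempty Λ.V with hV | ⟨⟨o⟩⟩
    · exact ⟨fun _ => 1, fun _ => one_pos, fun ε => (hV.false (Λ.src ε)).elim⟩
    · refine ⟨fun v => (Classical.choice (hconn o v)).wprod w,
        fun v => DiPath.wprod_pos w hpos _, fun ε => ?_⟩
      set p := Classical.choice (hconn o (Λ.src ε))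
      set p' := Classical.choice (hconn o (Λ.tgt ε))
      obtain ⟨q⟩ := hconn (Λ.tgt ε) o
      have h1 := hloop o (p.comp (.cons ε q))
      have h2 := hloop o (p'.comp q)
      rw [DiPath.wprod_comp] at h1 h2
      simp only [DiPath.wprod] at h1
      have hq := DiPath.wprod_pos w hpos q
      rw [eq_div_iff (DiPath.wprod_pos w hpos p).ne']
      apply mul_right_cancel₀ hq.ne'
      linarith
  refine ⟨d, hd, hwd, fun e α h => ?_, fun e β h => ?_⟩
  · simpa only [← hwd] using hsum e α h
  · have key := hsum (D.bar e) β (h.trans (D.src_bar e).symm)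
    rw [D.δ_bar] at key
    let φ : {ε : Λ.E // Λ.tgt ε = β ∧ π.onE ε = e} ≃
        {ε : Λ.E // Λ.src ε = β ∧ π.onE ε = D.bar e} :=
      { toFun := fun ε => ⟨barΛ ε.1, by rw [hsrc_bar, ε.2.1], by rw [hπ_bar, ε.2.2]⟩
        invFun := fun ε => ⟨barΛ ε.1, by rw [htgt_bar, ε.2.1],
          by rw [hπ_bar, ε.2.2, D.bar_bar]⟩
        left_inv := fun ε => Subtype.ext (hbar_bar ε.1)
        right_inv := fun ε => Subtype.ext (hbar_bar ε.1) }
    convert (φ.hasSum_iff).mpr key using 1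
    funext ε
    change _ = w (barΛ ε.1)
    rw [hwd, hsrc_bar, htgt_bar]
end

section
/- Let (Λ, w, π) be a balanced Γ-fair graph over a weighted bidirected graph (Γ, δ, ‾). Then for every edge e: a → b of Γ and every vertex α of Λ with π(α) = a, the set {ε ∈ E(Λ) : source(ε) = α, π(ε) = e} is finite and its cardinality is at most δ(e)². -/
/-- A `Γ`-fair graph is balanced if there exists an involution of the edges of `Λ`
exchanging sources and targets, inverting weights, and lying over the involution of `Γ`. -/
def IsBalanced {Γ Λ : DiGraph} (D : BidirectedWeights Γ) (w : Λ.E → ℝ)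
    (π : DiGraphHom Λ Γ) : Prop :=
  ∃ barΛ : Λ.E → Λ.E,
    (∀ ε, barΛ (barΛ ε) = ε) ∧
    (∀ ε, Λ.src (barΛ ε) = Λ.tgt ε) ∧
    (∀ ε, Λ.tgt (barΛ ε) = Λ.src ε) ∧
    (∀ ε, w ε * w (barΛ ε) = 1) ∧
    (∀ ε, π.onE (barΛ ε) = D.bar (π.onE ε))

theorem fiber_finite_card_le_delta_sq
    {Γ Λ : DiGraph} (D : BidirectedWeights Γ) (w : Λ.E → ℝ) (π : DiGraphHom Λ Γ)
    (hfair : IsFair D w π) (hbal : IsBalanced D w π) :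
    ∀ e : Γ.E, ∀ α : Λ.V, π.onV α = Γ.src e →
      {ε : Λ.E | Λ.src ε = α ∧ π.onE ε = e}.Finite ∧
        (Nat.card {ε : Λ.E | Λ.src ε = α ∧ π.onE ε = e} : ℝ) ≤ (D.δ e) ^ 2 := by
  obtain ⟨hw, hs⟩ := hfair
  obtain ⟨barΛ, -, hsrc, -, hmul, hπ⟩ := hbal
  intro e α hα
  have hδ := D.δ_pos e
  have hlow : ∀ ε : {ε : Λ.E // Λ.src ε = α ∧ π.onE ε = e}, (D.δ e)⁻¹ ≤ w ε.1 := by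
    rintro ⟨ε, h1, h2⟩
    have hsum := hs (D.bar e) (Λ.tgt ε) (by rw [D.src_bar, ← h2, π.map_tgt])
    have hle := le_hasSum hsum ⟨barΛ ε, hsrc ε, by rw [hπ, h2]⟩ (fun j _ => (hw j.1).le)
    rw [D.δ_bar] at hle
    have hm := hmul ε
    have hp := hw ε
    change (D.δ e)⁻¹ ≤ w ε
    rw [inv_le_iff_one_le_mul₀ hδ, ← hm]
    exact mul_le_mul_of_nonneg_left hle hp.le
  have hcard : ∀ s : Finset {ε : Λ.E // Λ.src ε = α ∧ π.onE ε = e},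
      (s.card : ℝ) ≤ (D.δ e) ^ 2 := by
    intro s
    have h1 := sum_le_hasSum s (fun j _ => (hw j.1).le) (hs e α hα)
    have h2 := Finset.card_nsmul_le_sum s (fun ε => w ε.1) _ (fun x _ => hlow x)
    rw [nsmul_eq_mul] at h2
    have h3 : (s.card : ℝ) * (D.δ e)⁻¹ ≤ D.δ e := h2.trans h1
    rw [← div_eq_mul_inv, div_le_iff₀ hδ] at h3
    rw [sq]
    exact h3
  have hfin : Finite {ε : Λ.E // Λ.src ε = α ∧ π.onE ε = e} := by
    by_contra hinf
    rw [not_finite_iff_infinite] at hinf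
    obtain ⟨n, hn⟩ := exists_nat_gt ((D.δ e) ^ 2)
    obtain ⟨s, hsn⟩ := Infinite.exists_subset_card_eq
      {ε : Λ.E // Λ.src ε = α ∧ π.onE ε = e} n
    have := hcard s
    rw [hsn] at this
    linarith
  refine ⟨Set.finite_coe_iff.mp hfin, ?_⟩
  have := Fintype.ofFinite {ε : Λ.E // Λ.src ε = α ∧ π.onE ε = e}
  have h := hcard Finset.univ
  rw [Finset.card_univ, ← Nat.card_eq_fintype_card] at h
  exact h
end

section
/- Let (Λ, w, π) be a balanced Γ-fair graph over a weighted bidirected graph (Γ, δ, ‾), and let α be a vertex of Λ. If the set of edges of Γ with source π(α) is finite, then the set of edges of Λ with source α is finite. -/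
theorem outgoing_edges_finite_of_balanced_fair
    {Γ Λ : DiGraph} (D : BidirectedWeights Γ) (w : Λ.E → ℝ) (π : DiGraphHom Λ Γ)
    (hfair : IsFair D w π) (hbal : IsBalanced D w π) (α : Λ.V)
    (hΓ : {e : Γ.E | Γ.src e = π.onV α}.Finite) :
    {ε : Λ.E | Λ.src ε = α}.Finite := by
  obtain ⟨hpos, hsum⟩ := hfair
  obtain ⟨b, hbb, hsrc, htgt, hw, hπ⟩ := hbal
  -- every weight is at most the weight of the edge below
  have hle : ∀ ε, w ε ≤ D.δ (π.onE ε) := by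
    intro ε
    have h := hsum (π.onE ε) (Λ.src ε) (π.map_src ε).symm
    exact le_hasSum h ⟨ε, rfl, rfl⟩ (fun j _ => (hpos j.1).le)
  -- hence every weight is bounded below on a fibre
  have hge : ∀ ε, 1 ≤ w ε * D.δ (π.onE ε) := by
    intro ε
    have h := hle (b ε)
    rw [hπ, D.δ_bar] at h
    rw [← hw ε]
    exact mul_le_mul_of_nonneg_left h (hpos ε).le
  have hfib : ∀ e ∈ {e : Γ.E | Γ.src e = π.onV α},
      {ε : Λ.E | Λ.src ε = α ∧ π.onE ε = e}.Finite := by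
    intro e he
    have h := (hsum e α he.symm).summable.tendsto_cofinite_zero
    have h2 := h.eventually (gt_mem_nhds (inv_pos.mpr (D.δ_pos e)))
    rw [Filter.eventually_cofinite] at h2
    have h3 : Finite {ε : Λ.E // Λ.src ε = α ∧ π.onE ε = e} := by
      rw [← Set.finite_univ_iff]
      refine h2.subset fun ε _ => ?_
      have h4 := hge ε.1
      rw [ε.2.2] at h4
      simp only [Set.mem_ofPred_eq, not_lt]
      rw [inv_le_iff_one_le_mul₀ (D.δ_pos e)]
      exact h4
    refine (Set.finite_range (Subtype.val : {ε : Λ.E // Λ.src ε = α ∧ π.onE ε = e} → Λ.E)).subset ?_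
    intro ε hε
    exact ⟨⟨ε, hε⟩, rfl⟩
  refine (hΓ.biUnion hfib).subset fun ε hε => ?_
  have hε' : Λ.src ε = α := hε
  simp only [Set.mem_iUnion, Set.mem_ofPred_eq]
  exact ⟨π.onE ε, by rw [π.map_src, hε'], hε', rfl⟩
end

section
/- Let ι be a finite type and f: ι → ℝ a function with f(i) > 0 for all i ∈ ι. If the multiset {f(i) : i ∈ ι} equals the multiset {f(i)⁻¹ : i ∈ ι} (images of f and of i ↦ f(i)⁻¹ over all of ι, counted with multiplicity), then there exists a permutation σ of ι with σ ∘ σ = id and f(σ(i)) = f(i)⁻¹ for every i ∈ ι. -/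
theorem exists_involutive_perm_of_multiset_eq_multiset_inv
    {ι : Type} [Fintype ι] (f : ι → ℝ) (hf : ∀ i, 0 < f i)
    (h : Finset.univ.val.map f = Finset.univ.val.map fun i => (f i)⁻¹) :
    ∃ σ : Equiv.Perm ι, (⇑σ ∘ ⇑σ = id) ∧ ∀ i, f (σ i) = (f i)⁻¹ := by
  classical
  have hc : ∀ c : ℝ, Nonempty ({i // (f i)⁻¹ = c} ≃ {i // f i = c}) := by
    intro c
    refine Fintype.card_eq.1 ?_
    have := congrArg (Multiset.count c) h
    rw [Multiset.count_map, Multiset.count_map] at this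
    rw [Fintype.card_subtype, Fintype.card_subtype, Finset.card_def, Finset.card_def,
      Finset.filter_val, Finset.filter_val]
    simp only [eq_comm (a := c)] at this
    exact this.symm
  let ρ : Equiv.Perm ι := Equiv.ofFiberEquiv fun c => (hc c).some
  have h1 : ∀ i, f (ρ i) = (f i)⁻¹ := fun i =>
    Equiv.ofFiberEquiv_map (fun c => (hc c).some) i
  have h2 : ∀ i, f (ρ.symm i) = (f i)⁻¹ := by
    intro i
    have := h1 (ρ.symm i)
    rw [Equiv.apply_symm_apply] at this
    rw [this, inv_inv]
  let s : ι → ι := fun i => if f i < 1 then ρ i else if 1 < f i then ρ.symm i else i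
  have hs1 : ∀ i, f i < 1 → s i = ρ i := fun i hi => if_pos hi
  have hs2 : ∀ i, 1 < f i → s i = ρ.symm i := fun i hi => by
    simp [s, hi, not_lt.2 hi.le]
  have hs3 : ∀ i, f i = 1 → s i = i := fun i hi => by simp [s, hi]
  have hs : Function.Involutive s := by
    intro i
    rcases lt_trichotomy (f i) 1 with hi | hi | hi
    · rw [hs1 i hi, hs2, Equiv.symm_apply_apply]
      rw [h1]
      exact (one_lt_inv₀ (hf i)).2 hi
    · rw [hs3 i hi, hs3 i hi]
    · rw [hs2 i hi, hs1, Equiv.apply_symm_apply]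
      rw [h2]
      exact inv_lt_one_of_one_lt₀ hi
  refine ⟨hs.toPerm s, hs.comp_self, fun i => ?_⟩
  change f (s i) = _
  rcases lt_trichotomy (f i) 1 with hi | hi | hi
  · rw [hs1 i hi, h1]
  · rw [hs3 i hi, hi, inv_one]
  · rw [hs2 i hi, h2]
end

section
/- Let (Γ, δ, ‾) be a weighted bidirected graph. For each vertex a of Γ let J^a be a set; for each edge e: a → b of Γ and each v ∈ J^a, w ∈ J^b let H^e_{vw} be a finite-dimensional complex inner product space, Φ^e_{vw}: H^e_{vw} → H^{ē}_{wv} a conjugate-linear map, and A^e_{vw}: H^{ē}_{wv} → H^e_{vw} an adjoint of Φ^e_{vw}. Assume: (zigzag) Φ^{ē}_{wv} ∘ Φ^e_{vw} = id on H^e_{vw} for every edge e: a → b of Γ and all v ∈ J^a, w ∈ J^b; and (fairness) for every edge e: a → b of Γ and every v ∈ J^a, the family (trace(A^e_{vw} ∘ Φ^e_{vw}))_{w ∈ J^b} is unconditionally summable with sum δ(e). Then for every edge e: a → b of Γ and all v ∈ J^a, w ∈ J^b: every root of the characteristic polynomial of A^e_{vw} ∘ Φ^e_{vw} is a strictly positive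 real number, and the eigenvalue multiset of A^{ē}_{wv} ∘ Φ^{ē}_{wv} equals the image under λ ↦ λ⁻¹ of the eigenvalue multiset of A^e_{vw} ∘ Φ^e_{vw}. -/
open scoped ComplexInnerProductSpace

theorem aux_charpoly_roots {ι E : Type*} [Fintype ι] [AddCommGroup E] [Module ℂ E]
    [FiniteDimensional ℂ E] (b : Module.Basis ι ℂ E) (T : E →ₗ[ℂ] E) (μ : ι → ℂ)
    (h : ∀ i, T (b i) = μ i • b i) :
    T.charpoly.roots = Finset.univ.val.map μ := by
  classical
  have hM : LinearMap.toMatrix b b T = Matrix.diagonal μ := by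
    ext i j
    rw [LinearMap.toMatrix_apply, h, map_smul, Finsupp.smul_apply, Module.Basis.repr_self,
      Matrix.diagonal_apply, Finsupp.single_apply]
    by_cases hij : i = j
    · subst hij; simp
    · simp [hij, Ne.symm hij]
  rw [← LinearMap.charpoly_toMatrix T b, hM, Matrix.charpoly_diagonal]
  have h := Polynomial.roots_multiset_prod_X_sub_C (Finset.univ.val.map μ)
  rw [Multiset.map_map] at h
  exact h

theorem aux_main {E F : Type*} [NormedAddCommGroup E] [InnerProductSpace ℂ E]
    [FiniteDimensional ℂ E] [NormedAddCommGroup F] [InnerProductSpace ℂ F]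
    [FiniteDimensional ℂ F] (Φ : E →ₗ⋆[ℂ] F) (A : F →ₗ⋆[ℂ] E) (Ψ : F →ₗ⋆[ℂ] E) (B : E →ₗ⋆[ℂ] F)
    (hA : ∀ x y, ⟪Φ x, y⟫ = ⟪A y, x⟫) (hB : ∀ y x, ⟪Ψ y, x⟫ = ⟪B x, y⟫)
    (hz : ∀ x, Ψ (Φ x) = x) (hinj : Function.Injective Ψ) :
    (∀ μ ∈ (A.comp Φ : E →ₗ[ℂ] E).charpoly.roots, ∃ r : ℝ, 0 < r ∧ μ = (r : ℂ)) ∧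
      (B.comp Ψ : F →ₗ[ℂ] F).charpoly.roots =
        ((A.comp Φ : E →ₗ[ℂ] E).charpoly.roots).map fun μ => μ⁻¹ := by
  have hz' : ∀ y, Φ (Ψ y) = y := fun y => hinj (hz _)
  have hAB : ∀ x, A (B x) = x := by
    intro x
    refine ext_inner_right ℂ fun z => ?_
    rw [← hA, ← inner_conj_symm, ← hB, hz, inner_conj_symm]
  have hAinj : Function.Injective A := by
    rw [injective_iff_map_eq_zero]
    intro y hy
    have := hA (Ψ y) y
    rw [hz', hy, inner_zero_left] at this
    exact inner_self_eq_zero.1 this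
  have hBA : ∀ y, B (A y) = y := fun y => hAinj (hAB _)
  have hsym : (A.comp Φ : E →ₗ[ℂ] E).IsSymmetric := by
    intro x y
    change ⟪A (Φ x), y⟫ = ⟪x, A (Φ y)⟫
    rw [← hA, ← inner_conj_symm x, ← hA, inner_conj_symm]
  set b := hsym.eigenvectorBasis rfl with hb
  set r := hsym.eigenvalues rfl with hr
  have hT : ∀ i, (A.comp Φ : E →ₗ[ℂ] E) (b i) = (r i : ℂ) • b i :=
    fun i => hsym.apply_eigenvectorBasis rfl i
  have hT' : ∀ i, A (Φ (b i)) = (r i : ℂ) • b i := hT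
  have hΦ0 : ∀ x, Φ x = 0 → x = 0 := fun x hx => by rw [← hz x, hx, map_zero]
  have hpos : ∀ i, 0 < r i := by
    intro i
    have h1 := hA (b i) (Φ (b i))
    rw [hT', inner_smul_left, inner_self_eq_norm_sq_to_K, inner_self_eq_norm_sq_to_K,
      b.norm_eq_one] at h1
    have h2 : ‖Φ (b i)‖ ^ 2 = r i := by
      have : ((‖Φ (b i)‖ ^ 2 : ℝ) : ℂ) = (r i : ℂ) := by simpa using h1
      exact_mod_cast this
    rw [← h2]
    have : Φ (b i) ≠ 0 := fun h0 => by
      have := b.norm_eq_one i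
      rw [hΦ0 _ h0] at this
      simp at this
    positivity
  have hli : LinearIndependent ℂ (fun i => Φ (b i)) := by
    rw [Fintype.linearIndependent_iff]
    intro g hg i
    have h1 : ∑ i, (starRingEnd ℂ (g i)) • b i = 0 := by
      apply hΦ0
      simpa [map_sum] using hg
    have h2 := Fintype.linearIndependent_iff.1 b.toBasis.linearIndependent
      (fun i => starRingEnd ℂ (g i)) (by simpa using h1) i
    simpa using h2
  have hsp : ⊤ ≤ Submodule.span ℂ (Set.range fun i => Φ (b i)) := by
    intro y _
    rw [← hz' y, ← b.sum_repr (Ψ y), map_sum]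
    refine Submodule.sum_mem _ fun i _ => ?_
    rw [map_smulₛₗ]
    exact Submodule.smul_mem _ _ (Submodule.subset_span ⟨i, rfl⟩)
  let c := Module.Basis.mk hli hsp
  have hS : ∀ i, (B.comp Ψ : F →ₗ[ℂ] F) (c i) = ((r i : ℂ)⁻¹) • c i := by
    intro i
    have hc : c i = Φ (b i) := by simp [c]
    rw [hc]
    change B (Ψ (Φ (b i))) = _
    have hne : (r i : ℂ) ≠ 0 := by exact_mod_cast (hpos i).ne'
    have h3 := hBA (Φ (b i))
    rw [hT', map_smulₛₗ, Complex.conj_ofReal] at h3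
    rw [hz, ← h3, smul_smul, inv_mul_cancel₀ hne, one_smul]
  have e1 := aux_charpoly_roots b.toBasis (A.comp Φ : E →ₗ[ℂ] E) (fun i => (r i : ℂ))
    (by simpa using hT)
  have e2 := aux_charpoly_roots c (B.comp Ψ : F →ₗ[ℂ] F) _ hS
  rw [e1, e2]
  refine ⟨?_, by simp [Multiset.map_map, Function.comp_def]⟩
  intro μ hμ
  obtain ⟨i, _, rfl⟩ := Multiset.mem_map.1 hμ
  exact ⟨r i, hpos i, rfl⟩

theorem aux_transport {I : Type*} (K : I → Type*) [∀ i, NormedAddCommGroup (K i)]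
    [∀ i, InnerProductSpace ℂ (K i)] [∀ i, FiniteDimensional ℂ (K i)] {F : Type*}
    [NormedAddCommGroup F] [InnerProductSpace ℂ F] [FiniteDimensional ℂ F]
    (i j : I) (hij : j = i)
    (Φ : K i →ₗ⋆[ℂ] F) (A : F →ₗ⋆[ℂ] K i) (Ψ : F →ₗ⋆[ℂ] K j) (B : K j →ₗ⋆[ℂ] F)
    (hA : ∀ x y, ⟪Φ x, y⟫ = ⟪A y, x⟫) (hB : ∀ y x, ⟪Ψ y, x⟫ = ⟪B x, y⟫)
    (hz : ∀ x, HEq (Ψ (Φ x)) x) (hinj : Function.Injective Ψ) :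
    (∀ μ ∈ (A.comp Φ : K i →ₗ[ℂ] K i).charpoly.roots, ∃ r : ℝ, 0 < r ∧ μ = (r : ℂ)) ∧
      (B.comp Ψ : F →ₗ[ℂ] F).charpoly.roots =
        ((A.comp Φ : K i →ₗ[ℂ] K i).charpoly.roots).map fun μ => μ⁻¹ := by
  subst hij
  exact aux_main Φ A Ψ B hA hB (fun x => eq_of_heq (hz x)) hinj

theorem eigenvalues_of_fundamental_solution_antilinear_maps
    {Γ : DiGraph} (D : BidirectedWeights Γ)
    -- an indexing set `J a` for each vertex `a` of `Γ`; indices are packaged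
    -- as pairs `v = ⟨a, j⟩` with `j ∈ J a`
    (J : Γ.V → Type)
    -- a finite-dimensional complex inner product space `H e v w` for each edge `e` and
    -- indices `v, w`
    (H : Γ.E → (Σ a, J a) → (Σ a, J a) → Type)
    [∀ e v w, NormedAddCommGroup (H e v w)]
    [∀ e v w, InnerProductSpace ℂ (H e v w)]
    [∀ e v w, FiniteDimensional ℂ (H e v w)]
    -- conjugate-linear maps `Φ^e_{vw} : H^e_{vw} → H^{ē}_{wv}` and adjoints `A^e_{vw}`
    (Φ : ∀ e v w, H e v w →ₗ⋆[ℂ] H (D.bar e) w v)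
    (A : ∀ e v w, H (D.bar e) w v →ₗ⋆[ℂ] H e v w)
    (hadj : ∀ (e : Γ.E) (v w : Σ a, J a), v.1 = Γ.src e → w.1 = Γ.tgt e →
      ∀ (x : H e v w) (y : H (D.bar e) w v), ⟪Φ e v w x, y⟫ = ⟪A e v w y, x⟫)
    -- (zigzag) `Φ^{ē}_{wv} ∘ Φ^e_{vw} = id` (stated with `HEq` since the codomain
    -- `H (bar (bar e)) v w` is only propositionally equal to `H e v w`)
    (hzig : ∀ (e : Γ.E) (v w : Σ a, J a), v.1 = Γ.src e → w.1 = Γ.tgt e →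
      ∀ x : H e v w, HEq (Φ (D.bar e) w v (Φ e v w x)) x)
    -- (fairness) the traces of `A^e_{vw} ∘ Φ^e_{vw}` over `w ∈ J^b` sum to `δ e`
    (hfair : ∀ (e : Γ.E) (v : Σ a, J a), v.1 = Γ.src e →
      HasSum (fun w : {w : Σ a, J a // w.1 = Γ.tgt e} =>
        LinearMap.trace ℂ (H e v w.1) ((A e v w.1).comp (Φ e v w.1)))
        ((D.δ e : ℂ))) :
    ∀ (e : Γ.E) (v w : Σ a, J a), v.1 = Γ.src e → w.1 = Γ.tgt e →
      (∀ μ ∈ ((A e v w).comp (Φ e v w)).charpoly.roots, ∃ r : ℝ, 0 < r ∧ μ = (r : ℂ)) ∧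
        ((A (D.bar e) w v).comp (Φ (D.bar e) w v)).charpoly.roots =
          (((A e v w).comp (Φ e v w)).charpoly.roots).map fun μ => μ⁻¹ := by
  intro e v w hv hw
  have hw' : w.1 = Γ.src (D.bar e) := hw.trans (D.src_bar e).symm
  have hv' : v.1 = Γ.tgt (D.bar e) := hv.trans (D.tgt_bar e).symm
  refine aux_transport (fun i => H i v w) e (D.bar (D.bar e)) (D.bar_bar e)
    (Φ e v w) (A e v w) (Φ (D.bar e) w v) (A (D.bar e) w v) (hadj e v w hv hw)
    (hadj (D.bar e) w v hw' hv') (hzig e v w hv hw) ?_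
  intro y y' h
  have h1 := hzig (D.bar e) w v hw' hv' y
  have h2 := hzig (D.bar e) w v hw' hv' y'
  rw [h] at h1
  exact eq_of_heq (h1.symm.trans h2)
end

section
/- Let (Λ, w, π) be a balanced Γ-fair graph over a weighted bidirected graph (Γ, δ, ‾), and assume that for every edge e: a → b of Γ and all vertices v, w of Λ with π(v) = a and π(w) = b, the set Λ^e(v,w) := {ε ∈ E(Λ) : source(ε) = v, target(ε) = w, π(ε) = e} is finite. Then there exist, for every edge e: a → b of Γ and all v ∈ π⁻¹(a), w ∈ π⁻¹(b): a finite-dimensional complex inner product space H^e_{vw}, a bijective conjugate-linear map Φ^e_{vw}: H^e_{vw} → H^{ē}_{wv}, and a conjugate-linear adjoint A^e_{vw}: H^{ē}_{wv} → H^e_{vw} of Φ^e_{vw}, such that: (i) Φ^{ē}_{wv} ∘ Φ^e_{vw} = id on H^e_{vw} for all e, v, w; (ii) for every edge e: a → b of Γ and every v ∈ π⁻¹(a), the family (trace(A^e_{vw} ∘ Φ^e_{vw}))_{w ∈ π⁻¹(b)} is unconditionally summable with sum δ(e); and (iii) for all e, v, w, the eigenvalue multiset of A^e_{vw} ∘ Φ^e_{vw}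 equals the multiset {w(ε) : ε ∈ Λ^e(v,w)} regarded as a multiset of complex numbers. -/
open scoped ComplexInnerProductSpace

/-- A `Γ`-fundamental-solution witness for a balanced `Γ`-fair graph `(Λ, w, π)`:
finite-dimensional complex inner product spaces `H e v w'`, bijective conjugate-linear
maps `Φ^e_{vw'} : H^e_{vw'} → H^{ē}_{w'v}` with conjugate-linear adjoints `A^e_{vw'}`,
satisfying the zigzag relation, the fairness (trace) condition, and whose eigenvalue
multisets are the weight multisets of the fibers of `π`. -/
structure FundamentalSolutionWitness {Γ Λ : DiGraph} (D : BidirectedWeights Γ)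
    (w : Λ.E → ℝ) (π : DiGraphHom Λ Γ)
    (hfin : ∀ (e : Γ.E) (v u : Λ.V),
      {ε : Λ.E | Λ.src ε = v ∧ Λ.tgt ε = u ∧ π.onE ε = e}.Finite) where
  H : Γ.E → Λ.V → Λ.V → Type
  [normed : ∀ e v u, NormedAddCommGroup (H e v u)]
  [ips : ∀ e v u, InnerProductSpace ℂ (H e v u)]
  [fd : ∀ e v u, FiniteDimensional ℂ (H e v u)]
  Φ : ∀ e v u, H e v u →ₗ⋆[ℂ] H (D.bar e) u v
  A : ∀ e v u, H (D.bar e) u v →ₗ⋆[ℂ] H e v u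
  Φ_bij : ∀ (e : Γ.E) (v u : Λ.V), π.onV v = Γ.src e → π.onV u = Γ.tgt e →
    Function.Bijective (Φ e v u)
  adj : ∀ (e : Γ.E) (v u : Λ.V), π.onV v = Γ.src e → π.onV u = Γ.tgt e →
    ∀ (x : H e v u) (y : H (D.bar e) u v), ⟪Φ e v u x, y⟫ = ⟪A e v u y, x⟫
  /-- (i) the zigzag relation `Φ^{ē}_{uv} ∘ Φ^e_{vu} = id`, stated with `HEq` since
  `H (bar (bar e)) v u` is only propositionally equal to `H e v u`. -/
  zigzag : ∀ (e : Γ.E) (v u : Λ.V), π.onV v = Γ.src e → π.onV u = Γ.tgt e →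
    ∀ x : H e v u, HEq (Φ (D.bar e) u v (Φ e v u x)) x
  /-- (ii) fairness: the traces of `A^e_{vu} ∘ Φ^e_{vu}` over `u ∈ π⁻¹(b)` sum to `δ e`. -/
  fair : ∀ (e : Γ.E) (v : Λ.V), π.onV v = Γ.src e →
    HasSum (fun u : {u : Λ.V // π.onV u = Γ.tgt e} =>
      LinearMap.trace ℂ (H e v u.1) ((A e v u.1).comp (Φ e v u.1))) ((D.δ e : ℂ))
  /-- (iii) the eigenvalue multiset of `A^e_{vu} ∘ Φ^e_{vu}` is the multiset of weights
  of the edges of `Λ` from `v` to `u` lying over `e`. -/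
  spectrum_eq : ∀ (e : Γ.E) (v u : Λ.V), π.onV v = Γ.src e → π.onV u = Γ.tgt e →
    ((A e v u).comp (Φ e v u)).charpoly.roots =
      ((hfin e v u).toFinset.val.map fun ε => ((w ε : ℂ)))

namespace FairAux

variable {Γ Λ : DiGraph}

/-- The fiber of edges from `v` to `u` over `e`. -/
abbrev Fib (π : DiGraphHom Λ Γ) (e : Γ.E) (v u : Λ.V) : Type :=
  {ε : Λ.E // Λ.src ε = v ∧ Λ.tgt ε = u ∧ π.onE ε = e}

/-- A weighted conjugate-linear permutation map between Euclidean spaces. -/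
noncomputable def conjMap {S T : Type} (f : T → S) (c : T → ℝ) :
    EuclideanSpace ℂ S →ₗ⋆[ℂ] EuclideanSpace ℂ T where
  toFun x := WithLp.toLp 2 fun t => (c t : ℂ) * (starRingEnd ℂ) (x (f t))
  map_add' x y := by
    ext t
    simp [mul_add]
  map_smul' a x := by
    ext t
    simp
    ring

theorem conjMap_apply {S T : Type} (f : T → S) (c : T → ℝ) (x : EuclideanSpace ℂ S) (t : T) :
    conjMap f c x t = (c t : ℂ) * (starRingEnd ℂ) (x (f t)) := rfl

theorem diag_toMatrix {S : Type} [Fintype S] [DecidableEq S]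
    (T : EuclideanSpace ℂ S →ₗ[ℂ] EuclideanSpace ℂ S) (d : S → ℂ)
    (h : ∀ x s, T x s = d s * x s) :
    LinearMap.toMatrix (EuclideanSpace.basisFun S ℂ).toBasis
      (EuclideanSpace.basisFun S ℂ).toBasis T = Matrix.diagonal d := by
  ext i j
  rw [LinearMap.toMatrix_apply]
  simp [h, Matrix.diagonal_apply, Pi.single_apply]

theorem diag_trace {S : Type} [Fintype S]
    (T : EuclideanSpace ℂ S →ₗ[ℂ] EuclideanSpace ℂ S) (d : S → ℂ)
    (h : ∀ x s, T x s = d s * x s) : LinearMap.trace ℂ _ T = ∑ s, d s := by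
  classical
  rw [LinearMap.trace_eq_matrix_trace ℂ (EuclideanSpace.basisFun S ℂ).toBasis,
    diag_toMatrix T d h, Matrix.trace_diagonal]

theorem diag_roots {S : Type} [Fintype S]
    (T : EuclideanSpace ℂ S →ₗ[ℂ] EuclideanSpace ℂ S) (d : S → ℂ)
    (h : ∀ x s, T x s = d s * x s) :
    T.charpoly.roots = (Finset.univ : Finset S).val.map d := by
  classical
  rw [← LinearMap.charpoly_toMatrix T (EuclideanSpace.basisFun S ℂ).toBasis,
    diag_toMatrix T d h, Matrix.charpoly_diagonal]
  have := Polynomial.roots_multiset_prod_X_sub_C ((Finset.univ : Finset S).val.map d)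
  rw [Multiset.map_map] at this
  exact this

theorem heq_of (π : DiGraphHom Λ Γ) {e e' : Γ.E} (he : e' = e) (v u : Λ.V)
    (x : EuclideanSpace ℂ (Fib π e' v u)) (y : EuclideanSpace ℂ (Fib π e v u))
    (h : ∀ ε h1 h2, x ⟨ε, h1⟩ = y ⟨ε, h2⟩) : HEq x y := by
  subst he
  apply heq_of_eq
  ext ⟨ε, hε⟩
  exact h ε hε hε

end FairAux

theorem balanced_fair_graph_gives_fundamental_solution
    {Γ Λ : DiGraph} (D : BidirectedWeights Γ) (w : Λ.E → ℝ) (π : DiGraphHom Λ Γ)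
    (hfair : IsFair D w π) (hbal : IsBalanced D w π)
    (hfin : ∀ (e : Γ.E) (v u : Λ.V),
      {ε : Λ.E | Λ.src ε = v ∧ Λ.tgt ε = u ∧ π.onE ε = e}.Finite) :
    Nonempty (FundamentalSolutionWitness D w π hfin) := by
  
  obtain ⟨b, hbb, hbs, hbt, hbw, hbe⟩ := hbal
  obtain ⟨hpos, hsum⟩ := hfair
  letI ft : ∀ e v u, Fintype (FairAux.Fib π e v u) := fun e v u => (hfin e v u).fintype
  let up : ∀ e v u, FairAux.Fib π (D.bar e) u v → FairAux.Fib π e v u := fun e v u t =>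
    ⟨b t.1, by rw [hbs, t.2.2.1], by rw [hbt, t.2.1], by rw [hbe, t.2.2.2, D.bar_bar]⟩
  let dn : ∀ e v u, FairAux.Fib π e v u → FairAux.Fib π (D.bar e) u v := fun e v u t =>
    ⟨b t.1, by rw [hbs, t.2.2.1], by rw [hbt, t.2.1], by rw [hbe, t.2.2.2]⟩
  have hud : ∀ e v u t, up e v u (dn e v u t) = t := fun e v u t => Subtype.ext (hbb _)
  have hdu : ∀ e v u t, dn e v u (up e v u t) = t := fun e v u t => Subtype.ext (hbb _)
  let Φ : ∀ e v u, EuclideanSpace ℂ (FairAux.Fib π e v u) →ₗ⋆[ℂ]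
      EuclideanSpace ℂ (FairAux.Fib π (D.bar e) u v) := fun e v u =>
    FairAux.conjMap (up e v u) fun t => √(w (b t.1))
  let A : ∀ e v u, EuclideanSpace ℂ (FairAux.Fib π (D.bar e) u v) →ₗ⋆[ℂ]
      EuclideanSpace ℂ (FairAux.Fib π e v u) := fun e v u =>
    FairAux.conjMap (dn e v u) fun t => √(w t.1)
  have hΦ : ∀ e v u x t, Φ e v u x t =
      ((√(w (b t.1)) : ℝ) : ℂ) * (starRingEnd ℂ) (x (up e v u t)) := fun _ _ _ _ _ => rfl
  have hA : ∀ e v u x t, A e v u x t =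
      ((√(w t.1) : ℝ) : ℂ) * (starRingEnd ℂ) (x (dn e v u t)) := fun _ _ _ _ _ => rfl
  have hcc : ∀ ε, ((√(w ε) : ℝ) : ℂ) * ((√(w (b ε)) : ℝ) : ℂ) = 1 := by
    intro ε
    rw [← Complex.ofReal_mul, ← Real.sqrt_mul (hpos ε).le, hbw]
    simp
  have hAΦ : ∀ e v u x t, ((A e v u).comp (Φ e v u)) x t = ((w t.1 : ℝ) : ℂ) * x t := by
    intro e v u x t
    rw [LinearMap.comp_apply, hA, hΦ, hud]
    have h1 : b (dn e v u t).1 = t.1 := hbb _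
    rw [h1]
    simp only [map_mul, Complex.conj_ofReal, Complex.conj_conj]
    rw [← mul_assoc, ← Complex.ofReal_mul, Real.mul_self_sqrt (hpos _).le]
  have htr : ∀ e v u, LinearMap.trace ℂ _ ((A e v u).comp (Φ e v u)) =
      ∑ t : FairAux.Fib π e v u, ((w t.1 : ℝ) : ℂ) := fun e v u =>
    FairAux.diag_trace _ _ (hAΦ e v u)
  refine ⟨{ H := fun e v u => EuclideanSpace ℂ (FairAux.Fib π e v u), Φ := Φ, A := A, Φ_bij := ?_, adj := ?_, zigzag := ?_, fair := ?_, spectrum_eq := ?_ }⟩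
  · intro e v u _ _
    constructor
    · intro x y hxy
      ext t
      have h := congrArg (fun z => z (dn e v u t)) hxy
      simp only [hΦ, hud] at h
      have h0 : ((√(w (b (dn e v u t).1)) : ℝ) : ℂ) ≠ 0 := by
        rw [Complex.ofReal_ne_zero]
        exact (Real.sqrt_pos.2 (hpos _)).ne'
      exact (starRingEnd ℂ).injective (mul_left_cancel₀ h0 h)
    · intro y
      refine ⟨WithLp.toLp 2 fun t =>
        ((√(w (b t.1)) : ℝ) : ℂ) * (starRingEnd ℂ) (y (dn e v u t)), ?_⟩
      ext t
      rw [hΦ]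
      have h1 : b (up e v u t).1 = t.1 := hbb _
      simp only [hdu, h1, map_mul, Complex.conj_ofReal, Complex.conj_conj]
      rw [← mul_assoc, mul_comm (((√(w (b t.1)) : ℝ) : ℂ)), hcc, one_mul]
  · intro e v u _ _ x y
    simp only [PiLp.inner_apply]
    refine Fintype.sum_equiv ⟨up e v u, dn e v u, hdu e v u, hud e v u⟩ _ _ ?_
    intro t
    simp only [Equiv.coe_fn_mk, hΦ, hA, hdu, RCLike.inner_apply, map_mul, Complex.conj_ofReal,
      Complex.conj_conj]
    have h1 : (up e v u t).1 = b t.1 := rfl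
    rw [h1]
    ring
  · intro e v u _ _ x
    refine FairAux.heq_of π (D.bar_bar e) v u _ _ ?_
    intro ε h1 h2
    rw [hΦ, hΦ]
    have h3 : up e v u (up (D.bar e) u v ⟨ε, h1⟩) = ⟨ε, h2⟩ := Subtype.ext (hbb _)
    have h4 : b (up (D.bar e) u v ⟨ε, h1⟩).1 = ε := hbb _
    rw [h3, h4]
    simp only [map_mul, Complex.conj_ofReal, Complex.conj_conj]
    rw [← mul_assoc, mul_comm (((√(w (b ε)) : ℝ) : ℂ)), hcc, one_mul]
  · intro e v hv
    simp only [htr]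
    have h := Complex.hasSum_ofReal.2 (hsum e v hv)
    let E : (Σ u : {u : Λ.V // π.onV u = Γ.tgt e}, FairAux.Fib π e v u.1) ≃
        {ε : Λ.E // Λ.src ε = v ∧ π.onE ε = e} :=
      { toFun := fun p => ⟨p.2.1, p.2.2.1, p.2.2.2.2⟩
        invFun := fun t => ⟨⟨Λ.tgt t.1, by rw [← π.map_tgt, t.2.2]⟩, ⟨t.1, t.2.1, rfl, t.2.2⟩⟩
        left_inv := by
          rintro ⟨⟨u, hu⟩, ⟨ε, h1⟩⟩
          obtain rfl : Λ.tgt ε = u := h1.2.1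
          rfl
        right_inv := fun t => rfl }
    have h' := (E.hasSum_iff).2 h
    exact h'.sigma fun u => hasSum_fintype _
  · intro e v u _ _
    rw [FairAux.diag_roots _ _ (hAΦ e v u)]
    have h1 : (hfin e v u).toFinset =
        (Finset.univ : Finset (FairAux.Fib π e v u)).map (Function.Embedding.subtype _) := by
      ext ε
      simp
    rw [h1, Finset.map_val, Multiset.map_map]
    rfl
end

section
/- Let E, F, E', F' be finite-dimensional complex inner product spaces, let Φ: E → F and Ψ: E' → F' be bijective conjugate-linear maps, and let A: F → E and A': F' → E' be adjoints of Φ and Ψ respectively. Then there exist unitary isomorphisms (ℂ-linear inner-product-preserving bijections) U: E' → E and V: F' → F with Φ ∘ U = V ∘ Ψ if and only if the characteristic polynomials of A ∘ Φ and of A' ∘ Ψ are equal. -/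
open scoped ComplexInnerProductSpace

theorem aux_inner {E F : Type}
    [NormedAddCommGroup E] [InnerProductSpace ℂ E]
    [NormedAddCommGroup F] [InnerProductSpace ℂ F]
    (Φ : E →ₗ⋆[ℂ] F) (A : F →ₗ⋆[ℂ] E) (hA : ∀ (x : E) (y : F), ⟪Φ x, y⟫ = ⟪A y, x⟫) (x y : E) :
    ⟪(A.comp Φ : E →ₗ[ℂ] E) x, y⟫ = ⟪Φ y, Φ x⟫ := by
  rw [LinearMap.comp_apply, hA]

theorem aux_symm {E F : Type}
    [NormedAddCommGroup E] [InnerProductSpace ℂ E]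
    [NormedAddCommGroup F] [InnerProductSpace ℂ F]
    (Φ : E →ₗ⋆[ℂ] F) (A : F →ₗ⋆[ℂ] E) (hA : ∀ (x : E) (y : F), ⟪Φ x, y⟫ = ⟪A y, x⟫) :
    (A.comp Φ : E →ₗ[ℂ] E).IsSymmetric := by
  intro x y
  rw [aux_inner Φ A hA, ← inner_conj_symm x, aux_inner Φ A hA, inner_conj_symm]

theorem conjLinear_unitarily_equivalent_iff_charpoly_eq
    {E F E' F' : Type}
    [NormedAddCommGroup E] [InnerProductSpace ℂ E] [FiniteDimensional ℂ E]
    [NormedAddCommGroup F] [InnerProductSpace ℂ F] [FiniteDimensional ℂ F]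
    [NormedAddCommGroup E'] [InnerProductSpace ℂ E'] [FiniteDimensional ℂ E']
    [NormedAddCommGroup F'] [InnerProductSpace ℂ F'] [FiniteDimensional ℂ F']
    (Φ : E →ₗ⋆[ℂ] F) (Ψ : E' →ₗ⋆[ℂ] F')
    (hΦ : Function.Bijective Φ) (hΨ : Function.Bijective Ψ)
    (A : F →ₗ⋆[ℂ] E) (hA : ∀ (x : E) (y : F), ⟪Φ x, y⟫ = ⟪A y, x⟫)
    (A' : F' →ₗ⋆[ℂ] E') (hA' : ∀ (x : E') (y : F'), ⟪Ψ x, y⟫ = ⟪A' y, x⟫) :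
    (∃ (U : E' ≃ₗᵢ[ℂ] E) (V : F' ≃ₗᵢ[ℂ] F), ∀ x : E', Φ (U x) = V (Ψ x)) ↔
      (A.comp Φ).charpoly = (A'.comp Ψ).charpoly := by
  have hT := aux_symm Φ A hA
  have hT' := aux_symm Ψ A' hA'
  constructor
  · rintro ⟨U, V, h⟩
    have key : (A.comp Φ : E →ₗ[ℂ] E) = U.toLinearEquiv.conj (A'.comp Ψ : E' →ₗ[ℂ] E') := by
      ext z
      obtain ⟨x, rfl⟩ := U.surjective z
      refine ext_inner_right ℂ fun w => ?_
      obtain ⟨y, rfl⟩ := U.surjective w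
      have e : U.toLinearEquiv.conj (A'.comp Ψ : E' →ₗ[ℂ] E') (U x)
          = U ((A'.comp Ψ : E' →ₗ[ℂ] E') x) := by
        simp [LinearEquiv.conj_apply]
      rw [e, aux_inner Φ A hA, h, h, V.inner_map_map, U.inner_map_map, aux_inner Ψ A' hA']
    rw [key, LinearEquiv.charpoly_conj]
  · intro hc
    have hn : Module.finrank ℂ E' = Module.finrank ℂ E := by
      rw [← LinearMap.charpoly_natDegree (A.comp Φ : E →ₗ[ℂ] E), hc,
        LinearMap.charpoly_natDegree]
    have he : hT.eigenvalues rfl = hT'.eigenvalues hn :=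
      (LinearMap.IsSymmetric.eigenvalues_eq_eigenvalues_iff hT rfl hT' hn).2 hc
    let b := hT.eigenvectorBasis rfl
    let b' := hT'.eigenvectorBasis hn
    let U : E' ≃ₗᵢ[ℂ] E := b'.equiv b (Equiv.refl _)
    have hU : ∀ x, (A.comp Φ : E →ₗ[ℂ] E) (U x) = U ((A'.comp Ψ : E' →ₗ[ℂ] E') x) := by
      have : (A.comp Φ : E →ₗ[ℂ] E) ∘ₗ U.toLinearEquiv.toLinearMap
          = U.toLinearEquiv.toLinearMap ∘ₗ (A'.comp Ψ : E' →ₗ[ℂ] E') := by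
        refine b'.toBasis.ext fun i => ?_
        have e : U (b' i) = b i := by simp [U]
        have h1 := hT.apply_eigenvectorBasis rfl i
        have h2 := hT'.apply_eigenvectorBasis hn i
        change (A.comp Φ : E →ₗ[ℂ] E) (b i) = _ at h1
        change (A'.comp Ψ : E' →ₗ[ℂ] E') (b' i) = _ • b' i at h2
        rw [OrthonormalBasis.coe_toBasis]
        change (A.comp Φ : E →ₗ[ℂ] E) (U (b' i)) = U ((A'.comp Ψ : E' →ₗ[ℂ] E') (b' i))
        rw [h2, e, h1, map_smul, e, he]
      exact fun x => LinearMap.congr_fun this x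
    let Φe := LinearEquiv.ofBijective Φ hΦ
    let Ψe := LinearEquiv.ofBijective Ψ hΨ
    let V : F' ≃ₗ[ℂ] F := (Ψe.symm.trans U.toLinearEquiv).trans Φe
    have hV : ∀ x, V (Ψ x) = Φ (U x) := by
      intro x
      change Φ (U (Ψe.symm (Ψe x))) = _
      rw [LinearEquiv.symm_apply_apply]
    refine ⟨U, ⟨V, fun z => ?_⟩, fun x => (hV x).symm⟩
    obtain ⟨x, rfl⟩ := hΨ.2 z
    rw [hV, @norm_eq_sqrt_re_inner ℂ, @norm_eq_sqrt_re_inner ℂ _ _ _ _ (Ψ x),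
      ← aux_inner Φ A hA, hU, U.inner_map_map, aux_inner Ψ A' hA']
end

section
/- Let E be a finite-dimensional complex inner product space, let Φ, Ψ: E → E be bijective conjugate-linear maps satisfying Φ ∘ Φ = id_E and Ψ ∘ Ψ = id_E, and let A and B be adjoints of Φ and Ψ respectively. If the characteristic polynomials of A ∘ Φ and of B ∘ Ψ are equal, then there exists a unitary isomorphism (ℂ-linear inner-product-preserving bijection) U: E → E such that Φ = U ∘ Ψ ∘ U⁻¹. -/
open scoped ComplexInnerProductSpace

/-- The polynomial with conjugated coefficients. -/
noncomputable def conjPoly (p : Polynomial ℂ) : Polynomial ℂ := p.map (starRingEnd ℂ)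

theorem star_aeval_conjPoly
    {E : Type} [NormedAddCommGroup E] [InnerProductSpace ℂ E] [FiniteDimensional ℂ E]
    [CompleteSpace E] (T : E →L[ℂ] E) (p : Polynomial ℂ) :
    star (Polynomial.aeval T p) = Polynomial.aeval (star T) (conjPoly p) := by
  unfold conjPoly
  induction p using Polynomial.induction_on' with
  | add p q hp hq => simp only [map_add, star_add, Polynomial.map_add, hp, hq]
  | monomial n a =>
    simp only [Polynomial.aeval_monomial, Polynomial.map_monomial, star_mul, star_pow]
    rw [← algebraMap_star_comm]
    exact (Algebra.commutes _ _).symm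

theorem conj_aeval_apply
    {E : Type} [NormedAddCommGroup E] [InnerProductSpace ℂ E]
    (Ψ : E →ₗ⋆[ℂ] E) (S S' : E →L[ℂ] E) (h : ∀ x, Ψ (S x) = S' (Ψ x)) (p : Polynomial ℂ)
    (x : E) :
    Ψ (Polynomial.aeval S p x) = Polynomial.aeval S' (conjPoly p) (Ψ x) := by
  unfold conjPoly
  induction p using Polynomial.induction_on' with
  | add p q hp hq => simp only [map_add, Polynomial.map_add, hp, hq, ContinuousLinearMap.add_apply]
  | monomial n a =>
    have hn : ∀ x, Ψ ((S ^ n) x) = (S' ^ n) (Ψ x) := by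
      induction n with
      | zero => intro x; simp
      | succ n ih => 
        intro x
        have h1 : (S ^ (n + 1)) x = (S ^ n) (S x) := by rw [pow_succ]; rfl
        have h2 : (S' ^ (n + 1)) (Ψ x) = (S' ^ n) (S' (Ψ x)) := by rw [pow_succ]; rfl
        rw [h1, h2, ih, h]
    simp only [Polynomial.aeval_monomial, Polynomial.map_monomial, Algebra.algebraMap_eq_smul_one,
      smul_mul_assoc, one_mul, ContinuousLinearMap.smul_apply, LinearMap.map_smulₛₗ, hn]

theorem exists_unitary_sqrt
    {E : Type} [NormedAddCommGroup E] [InnerProductSpace ℂ E] [FiniteDimensional ℂ E]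
    [CompleteSpace E] (T : E →L[ℂ] E) (hT : T ∈ unitary (E →L[ℂ] E)) :
    ∃ p : Polynomial ℂ, Polynomial.aeval T p ∈ unitary (E →L[ℂ] E) ∧
      Polynomial.aeval T p * Polynomial.aeval T p = T := by
  have hnorm : IsStarNormal T := by
    constructor
    rw [Commute, SemiconjBy, Unitary.star_mul_self_of_mem hT, Unitary.mul_star_self_of_mem hT]
  have hfin : (spectrum ℂ T).Finite := by
    have : FiniteDimensional ℂ (E →L[ℂ] E) := inferInstance
    have hint : IsIntegral ℂ T := Algebra.IsIntegral.isIntegral T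
    refine (Polynomial.rootSet_finite (minpoly ℂ T) ℂ).subset ?_
    intro z hz
    rw [Polynomial.mem_rootSet]
    refine ⟨minpoly.ne_zero hint, ?_⟩
    have h1 := spectrum.subset_polynomial_aeval T (minpoly ℂ T) ⟨z, hz, rfl⟩
    rw [minpoly.aeval] at h1
    by_contra h0
    apply h1
    rw [spectrum.mem_resolventSet_iff, sub_zero]
    exact (IsUnit.mk0 _ (by simpa using h0)).map (algebraMap ℂ (E →L[ℂ] E))
  let p : Polynomial ℂ := Lagrange.interpolate hfin.toFinset id (fun z => z ^ (1/2 : ℂ))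
  have hp : ∀ z ∈ spectrum ℂ T, p.eval z = z ^ (1/2 : ℂ) := by
    intro z hz
    exact Lagrange.eval_interpolate_at_node (s := hfin.toFinset) (v := id)
      (fun z => z ^ (1/2 : ℂ)) Function.injective_id.injOn (hfin.mem_toFinset.2 hz)
  have hsq : ∀ z ∈ spectrum ℂ T, p.eval z * p.eval z = z := by
    intro z hz
    rw [hp z hz, ← sq]
    have := Complex.cpow_nat_inv_pow z (n := 2) two_ne_zero
    simpa using this
  clear_value p
  refine ⟨p, ?_, ?_⟩
  · rw [← cfc_polynomial p T hnorm, cfc_unitary_iff _ T hnorm p.continuous.continuousOn]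
    intro z hz
    have h1 : ‖z‖ = 1 := by
      simpa using spectrum.subset_circle_of_unitary hT hz
    have h2 : ‖p.eval z‖ * ‖p.eval z‖ = 1 := by rw [← norm_mul, hsq z hz, h1]
    have h3 : ((‖p.eval z‖ * ‖p.eval z‖ : ℝ) : ℂ) = 1 := by rw [h2]; simp
    rw [Complex.star_def, Complex.conj_mul']
    rw [sq]; exact_mod_cast h2
  · rw [← map_mul, ← cfc_polynomial (p * p) T hnorm]
    conv_rhs => rw [← cfc_id ℂ T]
    apply cfc_congr
    intro z hz
    simp [hsq z hz]

theorem conj_of_same_form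
    {E : Type} [NormedAddCommGroup E] [InnerProductSpace ℂ E] [FiniteDimensional ℂ E]
    (Φ Ψ : E →ₗ⋆[ℂ] E)
    (hΦinv : ∀ x : E, Φ (Φ x) = x) (hΨinv : ∀ x : E, Ψ (Ψ x) = x)
    (h : ∀ x y : E, ⟪Φ x, Φ y⟫ = ⟪Ψ x, Ψ y⟫) :
    ∃ U : E ≃ₗᵢ[ℂ] E, ∀ x : E, Φ x = U (Ψ (U.symm x)) := by
  haveI : CompleteSpace E := FiniteDimensional.complete ℂ E
  let L : E ≃ₗ[ℂ] E :=
    { toFun := fun x => Φ (Ψ x)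
      invFun := fun x => Ψ (Φ x)
      map_add' := by intro x y; simp
      map_smul' := by intro c x; simp [LinearMap.map_smulₛₗ]
      left_inv := by intro x; simp [hΦinv, hΨinv]
      right_inv := by intro x; simp [hΦinv, hΨinv] }
  let T : E ≃ₗᵢ[ℂ] E := L.isometryOfInner (by
    intro x y
    change ⟪Φ (Ψ x), Φ (Ψ y)⟫ = _
    rw [h, hΨinv, hΨinv])
  let t := Unitary.linearIsometryEquiv.symm T
  have ht : ∀ x, (t : E →L[ℂ] E) x = Φ (Ψ x) := fun x => rfl
  have hts : ∀ x, (star (t : E →L[ℂ] E)) x = Ψ (Φ x) := by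
    intro x
    have h1 : star (t : E →L[ℂ] E) * t = 1 := Unitary.coe_star_mul_self t
    have h2 := congrArg (fun f : E →L[ℂ] E => f (Ψ (Φ x))) h1
    change star (t : E →L[ℂ] E) ((t : E →L[ℂ] E) (Ψ (Φ x))) = Ψ (Φ x) at h2
    rwa [ht, hΨinv, hΦinv] at h2
  obtain ⟨p, hp, hpp⟩ := exists_unitary_sqrt (t : E →L[ℂ] E) t.2
  have key : ∀ x, Ψ (Polynomial.aeval (t : E →L[ℂ] E) p x)
      = star (Polynomial.aeval (t : E →L[ℂ] E) p) (Ψ x) := by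
    intro x
    rw [star_aeval_conjPoly]
    apply conj_aeval_apply
    intro x
    rw [ht, hts]
  set u : E →L[ℂ] E := Polynomial.aeval (t : E →L[ℂ] E) p with hu
  let U : E ≃ₗᵢ[ℂ] E := Unitary.linearIsometryEquiv ⟨u, hp⟩
  have hU : ∀ x, U x = u x := fun x => rfl
  refine ⟨U, fun x => ?_⟩
  obtain ⟨z, rfl⟩ := U.surjective x
  rw [LinearIsometryEquiv.symm_apply_apply]
  have h1 : u (Ψ (u z)) = Ψ z := by
    rw [key]
    have := congrArg (fun f : E →L[ℂ] E => f (Ψ z)) (Unitary.mul_star_self_of_mem hp)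
    simpa using this
  rw [hU, hU, ← h1]
  have := congrArg (fun f : E →L[ℂ] E => f (Ψ (u z))) hpp
  have h2 : u (u (Ψ (u z))) = t.1 (Ψ (u z)) := by simpa using this
  rw [h2]
  change _ = Φ (Ψ (Ψ (u z)))
  rw [hΨinv]

theorem exists_unitary_of_charpoly_eq
    {E : Type} [NormedAddCommGroup E] [InnerProductSpace ℂ E] [FiniteDimensional ℂ E]
    (P Q : E →ₗ[ℂ] E) (hP : P.IsSymmetric) (hQ : Q.IsSymmetric)
    (h : P.charpoly = Q.charpoly) :
    ∃ V : E ≃ₗᵢ[ℂ] E, ∀ x, V (Q x) = P (V x) := by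
  have he := (hP.eigenvalues_eq_eigenvalues_iff rfl hQ rfl).2 h
  let b := hP.eigenvectorBasis rfl
  let c := hQ.eigenvectorBasis rfl
  let V : E ≃ₗᵢ[ℂ] E := c.equiv b (Equiv.refl _)
  refine ⟨V, fun x => ?_⟩
  have : (V.toLinearEquiv : E →ₗ[ℂ] E) ∘ₗ Q = P ∘ₗ (V.toLinearEquiv : E →ₗ[ℂ] E) := by
    apply c.toBasis.ext
    intro i
    have hV : V (c i) = b i := by simp [V]
    have h1 : Q (c i) = _ := hQ.apply_eigenvectorBasis rfl i
    have h2 : P (b i) = _ := hP.apply_eigenvectorBasis rfl i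
    change V (Q (c.toBasis i)) = P (V (c.toBasis i))
    rw [OrthonormalBasis.coe_toBasis, hV, h1, h2, map_smul, he]
    change _ • V (c i) = _ • b i
    rw [hV]
  exact LinearMap.congr_fun this x

theorem conjLinear_involutions_unitarily_conjugate_of_charpoly_eq
    {E : Type} [NormedAddCommGroup E] [InnerProductSpace ℂ E] [FiniteDimensional ℂ E]
    (Φ Ψ : E →ₗ⋆[ℂ] E)
    (hΦbij : Function.Bijective Φ) (hΨbij : Function.Bijective Ψ)
    (hΦinv : ∀ x : E, Φ (Φ x) = x) (hΨinv : ∀ x : E, Ψ (Ψ x) = x)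
    (A : E →ₗ⋆[ℂ] E) (hA : ∀ x y : E, ⟪Φ x, y⟫ = ⟪A y, x⟫)
    (B : E →ₗ⋆[ℂ] E) (hB : ∀ x y : E, ⟪Ψ x, y⟫ = ⟪B y, x⟫)
    (hchar : (A.comp Φ).charpoly = (B.comp Ψ).charpoly) :
    ∃ U : E ≃ₗᵢ[ℂ] E, ∀ x : E, Φ x = U (Ψ (U.symm x)) := by
  have sym : ∀ (F G : E →ₗ⋆[ℂ] E), (∀ x y : E, ⟪F x, y⟫ = ⟪G y, x⟫) →
      LinearMap.IsSymmetric (G.comp F : E →ₗ[ℂ] E) := by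
    intro F G h x y
    change ⟪G (F x), y⟫ = ⟪x, G (F y)⟫
    rw [← h, ← inner_conj_symm x, ← h, inner_conj_symm]
  obtain ⟨V, hV⟩ := exists_unitary_of_charpoly_eq _ _ (sym Φ A hA) (sym Ψ B hB) hchar
  have hV' : ∀ x, V (B (Ψ x)) = A (Φ (V x)) := hV
  let Ψ' : E →ₗ⋆[ℂ] E :=
    { toFun := fun x => V (Ψ (V.symm x))
      map_add' := by intro x y; simp
      map_smul' := by intro c x; simp [LinearMap.map_smulₛₗ] }
  have hΨ' : ∀ x, Ψ' x = V (Ψ (V.symm x)) := fun x => rfl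
  obtain ⟨W, hW⟩ := conj_of_same_form Φ Ψ' hΦinv (by intro x; simp [hΨ', hΨinv]) (by
    intro x y
    obtain ⟨x, rfl⟩ := V.surjective x
    obtain ⟨y, rfl⟩ := V.surjective y
    simp only [hΨ', LinearIsometryEquiv.symm_apply_apply, LinearIsometryEquiv.inner_map_map]
    rw [hA, hB, ← hV', LinearIsometryEquiv.inner_map_map])
  exact ⟨V.trans W, fun x => by rw [hW, hΨ']; rfl⟩
end
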